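/- arXiv:1303.0503 — 2 statements merged into one kernel-verified Lean document; each statement's English description precedes it below -/
import Mathlib

section
/- Let p = 3 and q = p^m with m an even positive integer. Then n_{1,0} + n_{−1,0} + p²(n_{1,1}+n_{−1,1}) + p⁴(n_{1,2}+n_{−1,2}) + p⁶(n_{1,3}+n_{−1,3}) + p⁸(n_{1,4}+n_{−1,4}) = (8(p^m − 1)² − p^m + 1)·p^m. -/
open Complex Finset

noncomputable def zetaPow (p : ℕ) (a : ZMod p) : ℂ :=
  Complex.exp (2 * Real.pi * Complex.I * (a.val : ℂ) / (p : ℂ))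

noncomputable def expSum (p m : ℕ) [Fact p.Prime]
    (α β γ : GaloisField p m) : ℂ :=
  letI : Fintype (GaloisField p m) := Fintype.ofFinite _
  ∑ x : GaloisField p m,
    zetaPow p ((Algebra.trace (ZMod p) (GaloisField p m))
      (α * x ^ 2 + β * x ^ (p + 1) + γ * x ^ (p ^ 2 + 1)))

noncomputable def nval (p m : ℕ) (ε : ℤ) (j : ℕ) : ℂ :=
  if j % 2 = 0 then (ε : ℂ) * ((Real.sqrt ((p : ℝ) ^ (m + j)) : ℝ) : ℂ)
  else (ε : ℂ) * Complex.I * ((Real.sqrt ((p : ℝ) ^ (m + j)) : ℝ) : ℂ)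

noncomputable def nn (p m : ℕ) [Fact p.Prime] (ε : ℤ) (j : ℕ) : ℕ :=
  {t : GaloisField p m × GaloisField p m × GaloisField p m |
    t ≠ (0, 0, 0) ∧ expSum p m t.1 t.2.1 t.2.2 = nval p m ε j}.ncard

/-!
With `φ` the Frobenius of `F = 𝔽_q` and `Ψ` a primitive additive character of the ring `F³`, the sum
`S(t)` is `∑ₓ Ψ(t · (x², x φ(x), x φ²(x)))`. By orthogonality its fourth moment counts the `v ∈ F⁴`
with `∑ vᵢ² = ∑ vᵢ φ(vᵢ) = ∑ vᵢ φ²(vᵢ) = 0`. Since `-1` is a sum of two squares in the prime field,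
a change of coordinates over the prime field turns `2 ∑ vᵢ φ(vᵢ)` into
`a φ(d) + φ(a) d - b φ(c) - φ(b) c`, and on the cone `ad = bc` this form times `a φ(a)` is
`(a φ(b) - φ(a) b) (a φ(c) - φ(a) c)`. So for `a ≠ 0` the second equation says that `b / a` or
`c / a` lies in the prime field, and the third equation is then automatic.

On the other hand `S(t)` is the character sum of a quadratic form over `𝔽_p` whose radical consists
of roots of a linearized polynomial of degree at most `p⁴`. Diagonalizing, a radical of dimension
`j ≤ 4` gives `S(t) = ± p^j G^(m - j)` with `G` the quadratic Gauss sum, and `G² = -p` when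
`p ≡ 3 mod 4`; hence `S(t)⁴ = p^(2 (m + j))`, and grouping the fourth moment by the value of `S(t)`
yields the weighted sum of the `n_{ε,j}`.
-/

section Characters

/-- The external product of two additive characters; it makes a family of exponential sums over
`R` depending on several parameters a family over a product ring depending on one parameter. -/
def prodChar {A B M : Type*} [AddMonoid A] [AddMonoid B] [CommMonoid M] (ψ : AddChar A M)
    (χ : AddChar B M) : AddChar (A × B) M :=
  ψ.compAddMonoidHom (AddMonoidHom.fst A B) * χ.compAddMonoidHom (AddMonoidHom.snd A B)

theorem prodChar_apply {A B M : Type*} [AddMonoid A] [AddMonoid B] [CommMonoid M]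
    (ψ : AddChar A M) (χ : AddChar B M) (x : A × B) : prodChar ψ χ x = ψ x.1 * χ x.2 :=
  rfl

theorem isPrimitive_prodChar {R S M : Type*} [CommRing R] [CommRing S] [CommMonoid M]
    {ψ : AddChar R M} {χ : AddChar S M} (hψ : ψ.IsPrimitive) (hχ : χ.IsPrimitive) :
    (prodChar ψ χ).IsPrimitive := by
  rintro ⟨a, b⟩ hab htrivial
  have heval (x : R) (y : S) : ψ (a * x) * χ (b * y) = 1 := DFunLike.congr_fun htrivial (x, y)
  by_cases ha : a = 0
  · have hb : b ≠ 0 := fun hb ↦ hab (by rw [ha, hb, Prod.mk_zero_zero])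
    exact hχ hb <| AddChar.ext _ _ fun y ↦ by simpa using heval 0 y
  · exact hψ ha <| AddChar.ext _ _ fun x ↦ by simpa using heval x 0

theorem isPrimitive_compAddMonoidHom_trace {K F M : Type*} [Field K] [Field F] [Algebra K F]
    [FiniteDimensional K F] [Algebra.IsSeparable K F] [CommMonoid M] {ψ : AddChar K M}
    (hψ : ψ ≠ 1) : (ψ.compAddMonoidHom (Algebra.trace K F).toAddMonoidHom).IsPrimitive :=
  AddChar.IsPrimitive.of_ne_one fun h ↦
    hψ <| AddChar.compAddMonoidHom_injective_left _ (Algebra.trace_surjective K F) h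

theorem map_sum_eq_prod_addChar {ι A M : Type*} [AddCommMonoid A] [CommMonoid M] (ψ : AddChar A M)
    (s : Finset ι) (f : ι → A) : ψ (∑ i ∈ s, f i) = ∏ i ∈ s, ψ (f i) :=
  map_prod ψ.toMonoidHom (fun i ↦ Multiplicative.ofAdd (f i)) s

theorem sum_pow_sum_addChar_mul {R R' X : Type*} [CommRing R] [Fintype R] [DecidableEq R]
    [CommRing R'] [IsDomain R'] [Fintype X] {ψ : AddChar R R'} (hψ : ψ.IsPrimitive) (f : X → R)
    (n : ℕ) :
    ∑ t, (∑ x, ψ (t * f x)) ^ n = Fintype.card R * #{v : Fin n → X | ∑ i, f (v i) = 0} := by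
  calc ∑ t, (∑ x, ψ (t * f x)) ^ n
      = ∑ t, ∑ v : Fin n → X, ψ (t * ∑ i, f (v i)) := by
        simp only [Finset.sum_pow', Fintype.piFinset_univ, Finset.mul_sum, map_sum_eq_prod_addChar]
    _ = ∑ v : Fin n → X, if ∑ i, f (v i) = 0 then (Fintype.card R : R') else 0 := by
        rw [Finset.sum_comm]
        simp only [AddChar.sum_mulShift _ hψ, Nat.cast_ite, Nat.cast_zero]
    _ = Fintype.card R * #{v : Fin n → X | ∑ i, f (v i) = 0} := by
        rw [← Finset.sum_filter, Finset.sum_const, nsmul_eq_mul, mul_comm]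

end Characters

section QuadraticForms

variable {K : Type*} [Field K] [Fintype K] {R : Type*} [CommRing R]

theorem sum_addChar_weightedSumSquares {ι : Type*} [Fintype ι] [DecidableEq ι] (ψ : AddChar K R)
    (w : ι → K) :
    ∑ v, ψ (QuadraticMap.weightedSumSquares K w v) = ∏ i, ∑ x, ψ (w i * x ^ 2) := by
  simp only [QuadraticMap.weightedSumSquares_apply, map_sum_eq_prod_addChar, smul_eq_mul, ← sq,
    Finset.prod_univ_sum, Fintype.piFinset_univ]

variable [DecidableEq K]

/-- The quadratic Gauss sum of `ψ`, i.e. the Gauss sum of `ψ` against the quadratic character. -/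
noncomputable def quadraticGaussSum (ψ : AddChar K R) : R :=
  gaussSum ((quadraticChar K).ringHomComp (Int.castRingHom R)) ψ

theorem quadraticGaussSum_sq [IsDomain R] [CharZero R] (hK : ringChar K ≠ 2) {ψ : AddChar K R}
    (hψ : ψ.IsPrimitive) :
    quadraticGaussSum ψ ^ 2 = quadraticChar K (-1) * Fintype.card K := by
  have hne : (quadraticChar K).ringHomComp (Int.castRingHom R) ≠ 1 :=
    (MulChar.ringHomComp_ne_one_iff Int.cast_injective).mpr (quadraticChar_ne_one hK)
  rw [quadraticGaussSum, gaussSum_sq hne ((quadraticChar_isQuadratic K).comp _) hψ,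
    MulChar.ringHomComp_apply, eq_intCast]

theorem sum_addChar_mul_sq [IsDomain R] (hK : ringChar K ≠ 2) {ψ : AddChar K R}
    (hψ : ψ.IsPrimitive) {c : K} (hc : c ≠ 0) :
    ∑ x, ψ (c * x ^ 2) = quadraticChar K c * quadraticGaussSum ψ := by
  have hshift : quadraticGaussSum ψ =
      quadraticChar K c * quadraticGaussSum (ψ.mulShift c) := by
    simpa [quadraticGaussSum] using (gaussSum_mulShift
      ((quadraticChar K).ringHomComp (Int.castRingHom R)) ψ (Units.mk0 c hc)).symm
  have hχc : (quadraticChar K c : R) * quadraticChar K c = 1 := by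
    rw [← sq, ← Int.cast_pow, quadraticChar_sq_one hc, Int.cast_one]
  calc ∑ x, ψ (c * x ^ 2)
      = ∑ a, ∑ x with x ^ 2 = a, ψ (c * a) := by
        rw [← Finset.sum_fiberwise (g := fun x : K ↦ x ^ 2)]
        exact Finset.sum_congr rfl fun a _ ↦ Finset.sum_congr rfl fun x hx ↦ by
          rw [(Finset.mem_filter.mp hx).2]
    _ = ∑ a, (quadraticChar K a + 1 : R) * ψ (c * a) := by
        refine Finset.sum_congr rfl fun a _ ↦ ?_
        have hsqrt : (#{x : K | x ^ 2 = a} : ℤ) = quadraticChar K a + 1 := by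
          rw [← quadraticChar_card_sqrts hK a, Set.toFinset_ofPred]
        rw [Finset.sum_const, nsmul_eq_mul, ← Int.cast_natCast, hsqrt, Int.cast_add, Int.cast_one]
    _ = quadraticGaussSum (ψ.mulShift c) := by
        have hsum : ∑ a, ψ (c * a) = 0 := AddChar.sum_eq_zero_of_ne_one (hψ hc)
        simp only [add_mul, one_mul, Finset.sum_add_distrib]
        rw [hsum, add_zero]
        rfl
    _ = quadraticChar K c * quadraticGaussSum ψ := by
        rw [hshift, ← mul_assoc, hχc, one_mul]

theorem exists_sum_addChar_quadraticForm [IsDomain R] (hK : ringChar K ≠ 2) {ψ : AddChar K R}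
    (hψ : ψ.IsPrimitive) {V : Type*} [AddCommGroup V] [Module K V] [Fintype V]
    (Q : QuadraticForm K V) :
    ∃ ε : ℤˣ, ∑ v, ψ (Q v) = (ε : ℤ) * Fintype.card K ^ Module.finrank K Q.radical *
      quadraticGaussSum ψ ^ Module.finrank K (V ⧸ Q.radical) := by
  have htwo : (2 : K) ≠ 0 := Ring.two_ne_zero hK
  have : NeZero (2 : K) := ⟨htwo⟩
  have : Invertible (2 : K) := invertibleOfNonzero htwo
  obtain ⟨w, hw⟩ := QuadraticForm.equivalent_weightedSumSquares Q
  have hrad : #{i | w i = 0} = Module.finrank K Q.radical := by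
    rw [QuadraticForm.finrank_radical_of_equiv_weightedSumSquares hw, ← Set.ncard_coe_finset]
    simp
  have hquot : #{i | ¬w i = 0} = Module.finrank K (V ⧸ Q.radical) := by
    have hsplit := Finset.card_filter_add_card_filter_not (s := Finset.univ) fun i ↦ w i = 0
    rw [Finset.card_fin] at hsplit
    have := Q.radical.finrank_quotient_add_finrank
    omega
  obtain ⟨ε, hε⟩ : IsUnit (∏ i with ¬w i = 0, quadraticChar K (w i)) :=
    IsUnit.prod_iff.mpr fun i hi ↦
      (IsUnit.mk0 _ (Finset.mem_filter.mp hi).2).map (quadraticChar K)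
  obtain ⟨e⟩ := hw
  refine ⟨ε, ?_⟩
  calc ∑ v, ψ (Q v)
      = ∑ v, ψ (QuadraticMap.weightedSumSquares K w v) :=
        Fintype.sum_equiv e.toEquiv _ _ fun v ↦ by rw [← e.map_app v]; rfl
    _ = ∏ i, if w i = 0 then (Fintype.card K : R)
          else quadraticChar K (w i) * quadraticGaussSum ψ := by
        rw [sum_addChar_weightedSumSquares]
        refine Finset.prod_congr rfl fun i _ ↦ ?_
        split_ifs with hi
        · simp [hi]
        · exact sum_addChar_mul_sq hK hψ hi
    _ = _ := by
        rw [Finset.prod_ite, Finset.prod_const, Finset.prod_mul_distrib, Finset.prod_const,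
          ← Int.cast_prod, ← hε, hrad, hquot]
        ring

end QuadraticForms

section LinearizedPolynomials

variable {K F : Type*} [Field K] [Fintype K] [Field F] [Algebra K F]

open Polynomial in
theorem finrank_le_of_sum_mul_pow_card_pow_eq_zero {N : ℕ} {c : Fin (N + 1) → F} (hc : c ≠ 0)
    {W : Submodule K F} (hW : ∀ u ∈ W, ∑ i, c i * u ^ Fintype.card K ^ (i : ℕ) = 0) :
    Module.finrank K W ≤ N := by
  classical
  set q := Fintype.card K
  have hq : 1 < q := Fintype.one_lt_card
  let P : F[X] := ∑ i, C (c i) * X ^ q ^ (i : ℕ)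
  have hcoeff (i : Fin (N + 1)) : P.coeff (q ^ (i : ℕ)) = c i := by
    simp [P, coeff_X_pow, Nat.pow_right_inj hq, Fin.val_inj]
  have hP : P ≠ 0 := fun h ↦ hc <| funext fun i ↦ by rw [← hcoeff, h, coeff_zero, Pi.zero_apply]
  have hdeg : P.natDegree ≤ q ^ N := natDegree_sum_le_of_forall_le _ _ fun i _ ↦
    (natDegree_C_mul_X_pow_le _ _).trans (Nat.pow_le_pow_right hq.le i.is_le)
  have hroots : (W : Set F) ⊆ P.roots.toFinset := fun u hu ↦ by
    simpa [hP, P, eval_finsetSum] using hW u hu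
  have : Finite W := Set.Finite.subset (Finset.finite_toSet _) hroots
  refine (Nat.pow_le_pow_iff_right hq).mp ?_
  calc q ^ Module.finrank K W = (W : Set F).ncard := by
        rw [← Nat.card_coe_set_eq, SetLike.coe_sort_coe, Module.natCard_eq_pow_finrank (K := K),
          Nat.card_eq_fintype_card]
    _ ≤ #P.roots.toFinset := Set.ncard_coe_finset _ ▸ Set.ncard_le_ncard hroots
    _ ≤ q ^ N := (P.roots.toFinset_card_le.trans P.card_roots').trans hdeg

end LinearizedPolynomials

section TraceForms

variable {K F : Type*} [Field K] [Field F] [Algebra K F]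

/-- The quadratic form `x ↦ Tr (α x ^ 2 + β x φ(x) + γ x φ²(x))` attached to `t = (α, β, γ)`. -/
noncomputable def traceQuadraticForm (φ : F ≃ₐ[K] F) (t : F × F × F) : QuadraticForm K F :=
  (Algebra.trace K F).compQuadraticMap
    (QuadraticMap.linMulLin (LinearMap.mulLeft K t.1) LinearMap.id +
      QuadraticMap.linMulLin (LinearMap.mulLeft K t.2.1) φ.toLinearMap +
      QuadraticMap.linMulLin (LinearMap.mulLeft K t.2.2) (φ.toLinearMap ∘ₗ φ.toLinearMap))

theorem traceQuadraticForm_apply (φ : F ≃ₐ[K] F) (t : F × F × F) (x : F) :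
    traceQuadraticForm φ t x =
      Algebra.trace K F (t.1 * x * x + t.2.1 * x * φ x + t.2.2 * x * φ (φ x)) :=
  rfl

theorem polar_traceQuadraticForm (φ : F ≃ₐ[K] F) (t : F × F × F) (u y : F) :
    QuadraticMap.polar (traceQuadraticForm φ t) u y =
      Algebra.trace K F ((t.2.2 * u + φ (t.2.1 * u) +
        φ (φ (2 * t.1 * u + t.2.1 * φ u + t.2.2 * φ (φ u)))) * φ (φ y)) := by
  set w := 2 * t.1 * u + t.2.1 * φ u + t.2.2 * φ (φ u)
  calc QuadraticMap.polar (traceQuadraticForm φ t) u y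
      = Algebra.trace K F (t.2.2 * u * φ (φ y)) + Algebra.trace K F (t.2.1 * u * φ y) +
          Algebra.trace K F (w * y) := by
        simp only [QuadraticMap.polar, traceQuadraticForm_apply, ← map_sub, ← map_add]
        congr 1
        simp only [map_add]
        ring
    _ = Algebra.trace K F (t.2.2 * u * φ (φ y)) + Algebra.trace K F (φ (t.2.1 * u * φ y)) +
          Algebra.trace K F (φ (φ (w * y))) := by
        simp only [Algebra.trace_eq_of_algEquiv]
    _ = _ := by
        rw [← map_add, ← map_add]
        congr 1
        simp only [map_mul]
        ring

theorem eq_zero_of_mem_radical_traceQuadraticForm [FiniteDimensional K F]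
    [Algebra.IsSeparable K F] (φ : F ≃ₐ[K] F) {t : F × F × F} {u : F}
    (hu : u ∈ (traceQuadraticForm φ t).radical) :
    t.2.2 * u + φ (t.2.1 * u) + φ (φ (2 * t.1 * u + t.2.1 * φ u + t.2.2 * φ (φ u))) = 0 := by
  refine (traceForm_nondegenerate K F).1 _ fun z ↦ ?_
  obtain ⟨y, rfl⟩ := (φ.surjective.comp φ.surjective) z
  rw [Algebra.traceForm_apply, Function.comp_apply, ← polar_traceQuadraticForm]
  exact DFunLike.congr_fun (QuadraticMap.radical_le_ker_polarBilin hu) y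

theorem finrank_radical_traceQuadraticForm_le [Fintype K] [Finite F] [NeZero (2 : F)]
    {t : F × F × F} (ht : t ≠ 0) :
    Module.finrank K (traceQuadraticForm (FiniteField.frobeniusAlgEquivOfAlgebraic K F)
      t).radical ≤ 4 := by
  let φ := FiniteField.frobeniusAlgEquivOfAlgebraic K F
  let c : Fin 5 → F := ![t.2.2, φ t.2.1, φ (φ (2 * t.1)), φ (φ t.2.1), φ (φ t.2.2)]
  have hc : c ≠ 0 := fun h ↦ ht <| by
    have hγ : t.2.2 = 0 := congr_fun h 0
    have hβ : φ t.2.1 = 0 := congr_fun h 1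
    have hα : φ (φ (2 * t.1)) = 0 := congr_fun h 2
    simp only [map_eq_zero, mul_eq_zero, two_ne_zero, false_or] at hα hβ
    exact Prod.ext hα (Prod.ext hβ hγ)
  refine finrank_le_of_sum_mul_pow_card_pow_eq_zero hc fun u hu ↦ ?_
  calc ∑ i : Fin 5, c i * u ^ Fintype.card K ^ (i : ℕ)
      = ∑ i : Fin 5, c i * φ^[i] u := by
        simp only [φ, FiniteField.coe_frobeniusAlgEquivOfAlgebraic_iterate]
    _ = t.2.2 * u + φ (t.2.1 * u) + φ (φ (2 * t.1 * u + t.2.1 * φ u + t.2.2 * φ (φ u))) := by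
        simp only [c, Fin.sum_univ_five, map_add, map_mul, ← add_assoc]
        rfl
    _ = 0 := eq_zero_of_mem_radical_traceQuadraticForm φ hu

end TraceForms

section TwistedCurve

theorem card_filter_mem_or_mem {A B : Type*} [Fintype A] [Fintype B] [DecidableEq A]
    [DecidableEq B] (s : Finset A) (t : Finset B) :
    (#{x : A × B | x.1 ∈ s ∨ x.2 ∈ t} : ℤ) =
      Fintype.card A * Fintype.card B - (Fintype.card A - #s) * (Fintype.card B - #t) := by
  have hcompl : ({x : A × B | x.1 ∈ s ∨ x.2 ∈ t} : Finset (A × B)) = (sᶜ ×ˢ tᶜ)ᶜ := by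
    ext x
    simp [or_iff_not_imp_left]
  rw [hcompl, Finset.card_compl, Finset.card_product, Nat.cast_sub, Fintype.card_prod]
  · push_cast [Finset.card_compl, Nat.cast_sub s.card_le_univ, Nat.cast_sub t.card_le_univ]
    ring
  · rw [← Finset.card_product]
    exact Finset.card_le_univ _

variable {F : Type*} [Field F]

/-- The curve `x ↦ (x², x φ(x), x φ²(x))`, whose additive character sums are the sums `S`. -/
def twistedCurve (φ : F →+* F) (x : F) : F × F × F :=
  (x ^ 2, x * φ x, x * φ (φ x))

theorem exists_natCast_sq_add_sq_eq_neg_one [Finite F] :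
    ∃ s t : ℕ, (s ^ 2 + t ^ 2 : F) = -1 := by
  obtain ⟨p, _⟩ := CharP.exists F
  have : NeZero p := ⟨CharP.char_ne_zero_of_finite F p⟩
  obtain ⟨s, t, hst⟩ := CharP.sq_add_sq F p (-1)
  exact ⟨s, t, mod_cast hst⟩

/-- The change of coordinates `v ↦ (a, b, c, d)` under which `v₀² + v₁² + v₂² + v₃² = ad - bc`,
built from a representation of `-1` as a sum of two squares. -/
noncomputable def fourSquaresEquiv [NeZero (2 : F)] {s t : F} (hst : s ^ 2 + t ^ 2 = -1) :
    (Fin 4 → F) ≃ F × F × F × F where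
  toFun v := (v 0 - (s * v 2 + t * v 3), (t * v 2 - s * v 3) - v 1,
    v 1 + (t * v 2 - s * v 3), v 0 + (s * v 2 + t * v 3))
  invFun := fun (a, b, c, d) ↦ ![(a + d) / 2, (c - b) / 2,
    -(s * ((d - a) / 2) + t * ((b + c) / 2)), -(t * ((d - a) / 2) - s * ((b + c) / 2))]
  left_inv v := by
    have htwo : (2 : F) ≠ 0 := two_ne_zero
    funext i
    fin_cases i <;>
      simp only [Fin.isValue, Fin.reduceFinMk, Fin.zero_eta, Fin.mk_one, Matrix.cons_val] <;>
      field_simp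
    · ring
    · ring
    · linear_combination (-2 * v 2) * hst
    · linear_combination (-2 * v 3) * hst
  right_inv := fun (a, b, c, d) ↦ by
    have htwo : (2 : F) ≠ 0 := two_ne_zero
    simp only [Prod.mk.injEq, Matrix.cons_val]
    field_simp
    refine ⟨?_, ?_, ?_, ?_⟩
    · linear_combination (d - a) * hst
    · linear_combination -(b + c) * hst
    · linear_combination -(b + c) * hst
    · linear_combination (a - d) * hst

theorem two_mul_sum_mul_map_eq [NeZero (2 : F)] {s t : F} (hst : s ^ 2 + t ^ 2 = -1)
    {φ : F →+* F} (hs : φ s = s) (ht : φ t = t) {v : Fin 4 → F} {a b c d : F}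
    (hv : fourSquaresEquiv hst v = (a, b, c, d)) :
    2 * ∑ i, v i * φ (v i) = a * φ d + φ a * d - b * φ c - φ b * c := by
  obtain ⟨rfl, rfl, rfl, rfl⟩ : _ ∧ _ ∧ _ ∧ _ := by
    simpa only [fourSquaresEquiv, Equiv.coe_fn_mk, Prod.mk.injEq] using hv
  simp only [Fin.sum_univ_four, map_sub, map_add, map_mul, hs, ht]
  linear_combination (2 * v 2 * φ (v 2) + 2 * v 3 * φ (v 3)) * hst

theorem mul_map_add_map_mul_eq_zero_iff (φ : F →+* F) {a b c d : F} (h : a * d = b * c) :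
    a * φ d + φ a * d - b * φ c - φ b * c = 0 ↔ a * φ b = φ a * b ∨ a * φ c = φ a * c := by
  obtain rfl | ha := eq_or_ne a 0
  · obtain rfl | rfl : b = 0 ∨ c = 0 := by simpa using h.symm
    all_goals simp
  have hφ : φ a * φ d = φ b * φ c := by rw [← map_mul, h, map_mul]
  have hfactor : a * φ a * (a * φ d + φ a * d - b * φ c - φ b * c) =
      (a * φ b - φ a * b) * (a * φ c - φ a * c) := by
    linear_combination a ^ 2 * hφ + φ a ^ 2 * h
  rw [← sub_eq_zero (a := a * φ b), ← sub_eq_zero (a := a * φ c), ← mul_eq_zero, ← hfactor]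
  simp [ha]

theorem mul_map_map_eq_map_map_mul (φ : F →+* F) {a b : F} (h : a * φ b = φ a * b) :
    a * φ (φ b) = φ (φ a) * b := by
  obtain rfl | ha := eq_or_ne a 0
  · simp
  have hφ : φ a * φ (φ b) = φ (φ a) * φ b := by rw [← map_mul, h, map_mul]
  refine mul_left_cancel₀ ((map_ne_zero φ).mpr ha) ?_
  linear_combination a * hφ + φ (φ a) * h

theorem card_sum_twistedCurve_eq_zero_eq_card [Fintype F] [DecidableEq F] [NeZero (2 : F)]
    (φ : F →+* F) :
    #{v : Fin 4 → F | ∑ i, twistedCurve φ (v i) = 0} =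
      #{x : F × F × F × F | x.1 * x.2.2.2 = x.2.1 * x.2.2.1 ∧
        (x.1 * φ x.2.1 = φ x.1 * x.2.1 ∨ x.1 * φ x.2.2.1 = φ x.1 * x.2.2.1)} := by
  -- `s` and `t` lie in the prime field, so every endomorphism of `F` fixes them
  obtain ⟨s, t, hst⟩ := exists_natCast_sq_add_sq_eq_neg_one (F := F)
  refine Finset.card_equiv (fourSquaresEquiv hst) fun v ↦ ?_
  obtain ⟨a, b, c, d, hv⟩ : ∃ a b c d, fourSquaresEquiv hst v = (a, b, c, d) := ⟨_, _, _, _, rfl⟩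
  rw [Finset.mem_filter_univ, Finset.mem_filter_univ, hv]
  have hiff (χ : F →+* F) :
      ∑ i, v i * χ (v i) = 0 ↔ a * χ d + χ a * d - b * χ c - χ b * c = 0 := by
    rw [← two_mul_sum_mul_map_eq hst (map_natCast χ s) (map_natCast χ t) hv,
      mul_eq_zero_iff_left two_ne_zero]
  have hdet : ∑ i, v i ^ 2 = 0 ↔ a * d = b * c := by
    have : a * d + a * d - b * c - b * c = 2 * (a * d - b * c) := by ring
    simpa [← sq, this, two_ne_zero, sub_eq_zero] using hiff (RingHom.id F)
  have hcurve : ∑ i, twistedCurve φ (v i) = 0 ↔ ∑ i, v i ^ 2 = 0 ∧ ∑ i, v i * φ (v i) = 0 ∧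
      ∑ i, v i * (φ.comp φ) (v i) = 0 := by
    simp [twistedCurve, Prod.ext_iff, Prod.fst_sum, Prod.snd_sum]
  rw [hcurve, hdet]
  refine and_congr_right fun h ↦ ?_
  rw [hiff φ, hiff, mul_map_add_map_mul_eq_zero_iff φ h,
    mul_map_add_map_mul_eq_zero_iff (φ.comp φ) h]
  exact and_iff_left_of_imp
    (Or.imp (mul_map_map_eq_map_map_mul φ) (mul_map_map_eq_map_map_mul φ))

theorem card_mul_map_eq_map_mul [Fintype F] [DecidableEq F] (φ : F →+* F) {a : F} (ha : a ≠ 0) :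
    #{b | a * φ b = φ a * b} = #{x | φ x = x} := by
  refine (Finset.card_equiv (Equiv.mulLeft₀ a ha) fun x ↦ ?_).symm
  have hφa : φ a ≠ 0 := (map_ne_zero φ).mpr ha
  have hmem : a * φ (a * x) = φ a * (a * x) ↔ φ x = x := by
    rw [map_mul, mul_left_comm a, mul_right_inj' hφa, mul_right_inj' ha]
  simpa only [Finset.mem_filter_univ] using! hmem.symm

theorem card_mul_eq_mul_and_mul_map_eq_of_ne_zero [Fintype F] [DecidableEq F] (φ : F →+* F) {a : F}
    (ha : a ≠ 0) :
    (#{x : F × F × F | a * x.2.2 = x.1 * x.2.1 ∧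
      (a * φ x.1 = φ a * x.1 ∨ a * φ x.2.1 = φ a * x.2.1)} : ℤ) =
      Fintype.card F ^ 2 - (Fintype.card F - #{x | φ x = x}) ^ 2 := by
  have hsolve : #{x : F × F × F | a * x.2.2 = x.1 * x.2.1 ∧
      (a * φ x.1 = φ a * x.1 ∨ a * φ x.2.1 = φ a * x.2.1)} =
      #{x : F × F | a * φ x.1 = φ a * x.1 ∨ a * φ x.2 = φ a * x.2} := by
    refine Finset.card_nbij' (fun x ↦ (x.1, x.2.1)) (fun x ↦ (x.1, x.2, x.1 * x.2 / a)) ?_ ?_ ?_ ?_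
    · intro x hx
      simpa using (Finset.mem_filter.mp hx).2.2
    · intro x hx
      simpa [mul_div_cancel₀ _ ha] using hx
    · rintro ⟨b, c, d⟩ hx
      simp [← (Finset.mem_filter.mp hx).2.1, ha]
    · exact fun x _ ↦ rfl
  have hcount := card_filter_mem_or_mem (A := F) (B := F) {b | a * φ b = φ a * b}
    {c | a * φ c = φ a * c}
  simp only [Finset.mem_filter_univ, card_mul_map_eq_map_mul φ ha] at hcount
  rw [hsolve, hcount]
  ring

theorem card_mul_eq_zero [Fintype F] [DecidableEq F] :
    (#{x : F × F × F | x.1 * x.2.1 = 0} : ℤ) =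
      Fintype.card F * (Fintype.card F ^ 2 - (Fintype.card F - 1) ^ 2) := by
  have hfree : #{x : F × F × F | x.1 * x.2.1 = 0} =
      #(({x : F × F | x.1 ∈ ({0} : Finset F) ∨ x.2 ∈ ({0} : Finset F)} : Finset (F × F)) ×ˢ
        (Finset.univ : Finset F)) :=
    Finset.card_equiv (Equiv.prodAssoc F F F).symm fun x ↦ by simp
  rw [hfree, Finset.card_product, Nat.cast_mul, card_filter_mem_or_mem, Finset.card_univ,
    Finset.card_singleton]
  push_cast
  ring

theorem card_sum_twistedCurve_eq_zero [Fintype F] [DecidableEq F] [NeZero (2 : F)]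
    (φ : F →+* F) :
    (#{v : Fin 4 → F | ∑ i, twistedCurve φ (v i) = 0} : ℤ) =
      (Fintype.card F - 1) *
        (Fintype.card F ^ 2 - (Fintype.card F - #{x | φ x = x}) ^ 2) +
      Fintype.card F * (Fintype.card F ^ 2 - (Fintype.card F - 1) ^ 2) := by
  have hfiber (a : F) : (#{x : F × F × F | a * x.2.2 = x.1 * x.2.1 ∧
      (a * φ x.1 = φ a * x.1 ∨ a * φ x.2.1 = φ a * x.2.1)} : ℤ) =
      if a = 0 then Fintype.card F * (Fintype.card F ^ 2 - (Fintype.card F - 1) ^ 2 : ℤ)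
      else Fintype.card F ^ 2 - (Fintype.card F - #{x | φ x = x}) ^ 2 := by
    split_ifs with ha
    · rw [← card_mul_eq_zero]
      simp [ha, eq_comm]
    · exact card_mul_eq_mul_and_mul_map_eq_of_ne_zero φ ha
  have hne : (#{a : F | a ≠ 0} : ℤ) = Fintype.card F - 1 := by
    rw [Finset.filter_ne', Finset.card_erase_of_mem (Finset.mem_univ 0), Finset.card_univ,
      Nat.cast_sub Fintype.card_pos, Nat.cast_one]
  rw [card_sum_twistedCurve_eq_zero_eq_card, Finset.card_filter, Fintype.sum_prod_type]
  simp only [← Finset.card_filter]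
  rw [Nat.cast_sum, Finset.sum_congr rfl fun a _ ↦ hfiber a, Finset.sum_ite, Finset.sum_const,
    Finset.sum_const, nsmul_eq_mul, nsmul_eq_mul, hne, Finset.filter_eq',
    if_pos (Finset.mem_univ 0), Finset.card_singleton, Nat.cast_one, one_mul, add_comm]

theorem card_frobenius_eq_self (K F : Type*) [Field K] [Fintype K] [Field F] [Fintype F]
    [DecidableEq F] [Algebra K F] :
    #{x | FiniteField.frobeniusAlgEquivOfAlgebraic K F x = x} = Fintype.card K := by
  set φ := FiniteField.frobeniusAlgEquivOfAlgebraic K F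
  have hfixed (x : F) : φ x = x ↔ x ∈ Set.range (algebraMap K F) := by
    refine ⟨fun hx ↦ (IsGalois.mem_range_algebraMap_iff_fixed x).mpr fun σ ↦ ?_, ?_⟩
    · obtain ⟨n, rfl⟩ := (FiniteField.bijective_frobeniusAlgEquivOfAlgebraic_pow K F).surjective σ
      exact (AlgEquiv.coe_pow φ n).symm ▸ Function.iterate_fixed hx n
    · rintro ⟨y, rfl⟩
      exact φ.commutes y
  rw [← Finset.card_univ, ← Finset.card_image_of_injective _ (algebraMap K F).injective]
  congr 1
  ext x
  simpa using hfixed x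

end TwistedCurve

section Moments

open FiniteField

theorem addChar_traceQuadraticForm_eq_prodChar {K F M : Type*} [Field K] [Field F] [Algebra K F]
    [CommMonoid M] (ψ : AddChar K M) (φ : F ≃ₐ[K] F) (t : F × F × F) (x : F) :
    letI χ := ψ.compAddMonoidHom (Algebra.trace K F).toAddMonoidHom
    ψ (traceQuadraticForm φ t x) =
      prodChar χ (prodChar χ χ) (t * twistedCurve (φ : F →+* F) x) := by
  simp only [traceQuadraticForm_apply, prodChar_apply, twistedCurve, map_add,
    AddChar.map_add_eq_mul]
  simp [mul_assoc, sq]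

variable {K F R : Type*} [Field K] [Fintype K] [Field F] [Fintype F] [Algebra K F]
  [CommRing R] [IsDomain R]

theorem sum_sum_addChar_traceQuadraticForm_pow_four [NeZero (2 : F)] {ψ : AddChar K R}
    (hψ : ψ ≠ 1) :
    ∑ t, (∑ x, ψ (traceQuadraticForm (frobeniusAlgEquivOfAlgebraic K F) t x)) ^ 4 =
      (Fintype.card F : R) ^ 3 * ((Fintype.card F - 1) *
        (Fintype.card F ^ 2 - (Fintype.card F - Fintype.card K) ^ 2) +
      Fintype.card F * (Fintype.card F ^ 2 - (Fintype.card F - 1) ^ 2)) := by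
  classical
  have hχ := isPrimitive_compAddMonoidHom_trace (F := F) hψ
  let φ : F →+* F := frobeniusAlgEquivOfAlgebraic K F
  have hfixed : #{x | φ x = x} = Fintype.card K := card_frobenius_eq_self K F
  have hcount := congrArg (Int.cast : ℤ → R) (card_sum_twistedCurve_eq_zero φ)
  simp only [addChar_traceQuadraticForm_eq_prodChar]
  rw [sum_pow_sum_addChar_mul (isPrimitive_prodChar hχ (isPrimitive_prodChar hχ hχ))]
  push_cast [hfixed] at hcount
  rw [hcount, Fintype.card_prod, Fintype.card_prod]
  push_cast
  ring

theorem sum_ne_zero_sum_addChar_traceQuadraticForm_pow_four [DecidableEq F] [NeZero (2 : F)]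
    {ψ : AddChar K R} (hψ : ψ ≠ 1) :
    ∑ t with t ≠ 0, (∑ x, ψ (traceQuadraticForm (frobeniusAlgEquivOfAlgebraic K F) t x)) ^ 4 =
      (Fintype.card F : R) ^ 3 * (Fintype.card F - 1) *
        (2 * (Fintype.card K + 1) * Fintype.card F - Fintype.card K ^ 2) := by
  have hzero : ∑ x, ψ (traceQuadraticForm (frobeniusAlgEquivOfAlgebraic K F) 0 x) =
      Fintype.card F := by
    simp [traceQuadraticForm_apply]
  have htotal := sum_sum_addChar_traceQuadraticForm_pow_four (F := F) hψ
  rw [← Finset.add_sum_erase _ _ (Finset.mem_univ 0), hzero] at htotal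
  rw [Finset.filter_ne']
  linear_combination htotal

end Moments

section Values

theorem sum_comp_eq_sum_card_nsmul {α β ι M : Type*} [DecidableEq β] [AddCommMonoid M]
    {s : Finset α} {I : Finset ι} {f : α → β} {N : ι → β} (hN : Function.Injective N)
    (hf : ∀ x ∈ s, ∃ i ∈ I, f x = N i) (g : β → M) :
    ∑ x ∈ s, g (f x) = ∑ i ∈ I, #{x ∈ s | f x = N i} • g (N i) := by
  have hmaps : ∀ x ∈ s, f x ∈ I.image N := fun x hx ↦ by
    obtain ⟨i, hi, h⟩ := hf x hx
    exact h ▸ Finset.mem_image_of_mem N hi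
  rw [← Finset.sum_fiberwise_of_maps_to hmaps, Finset.sum_image hN.injOn]
  refine Finset.sum_congr rfl fun i _ ↦ ?_
  rw [Finset.sum_congr rfl fun x hx ↦ by rw [(Finset.mem_filter.mp hx).2], Finset.sum_const]

variable {p m : ℕ}

theorem ofReal_sqrt_natCast_sq (n : ℕ) : (√(n : ℝ) : ℂ) ^ 2 = n := by
  rw [← Complex.ofReal_pow, Real.sq_sqrt n.cast_nonneg, Complex.ofReal_natCast]

theorem nval_eq_mul_I_pow_mul_sqrt_pow (ε : ℤ) (j : ℕ) :
    nval p m ε j = ε * I ^ (j % 2) * (√(p : ℝ) : ℂ) ^ (m + j) := by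
  have hsqrt : √((p : ℝ) ^ (m + j)) = √(p : ℝ) ^ (m + j) := by
    rw [← Real.sqrt_sq (pow_nonneg (Real.sqrt_nonneg (p : ℝ)) (m + j)), ← pow_mul, mul_comm,
      pow_mul, Real.sq_sqrt p.cast_nonneg]
  rw [nval, hsqrt]
  obtain hj | hj := Nat.mod_two_eq_zero_or_one j <;> simp [hj]

theorem I_pow_eq_units_mul_I_pow_mod_two (r : ℕ) :
    I ^ r = ((-1 : ℤˣ) ^ (r / 2) : ℤˣ) * I ^ (r % 2) := by
  conv_lhs => rw [← Nat.div_add_mod r 2, pow_add, pow_mul, I_sq]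
  simp

theorem nval_pow_four (ε : ℤˣ) (j : ℕ) : nval p m ε j ^ 4 = (p : ℂ) ^ (2 * (m + j)) := by
  have hε : ((ε : ℤ) : ℂ) ^ 4 = 1 := by
    obtain rfl | rfl := Int.units_eq_one_or ε <;> norm_num
  have hI : (I ^ (j % 2)) ^ 4 = 1 := by rw [← pow_mul, mul_comm, pow_mul, I_pow_four, one_pow]
  rw [nval_eq_mul_I_pow_mul_sqrt_pow, mul_pow, mul_pow, hε, hI, ← ofReal_sqrt_natCast_sq p]
  ring

theorem nval_injective (hp : 1 < p) :
    Function.Injective fun i : ℤˣ × ℕ ↦ nval p m i.1 i.2 := by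
  rintro ⟨ε, j⟩ ⟨δ, k⟩ h
  obtain rfl : j = k := by
    have hpow : (p : ℂ) ^ (2 * (m + j)) = (p : ℂ) ^ (2 * (m + k)) := by
      rw [← nval_pow_four ε, ← nval_pow_four δ]
      exact congrArg (· ^ 4) h
    have := Nat.pow_right_injective hp (by exact_mod_cast hpow)
    omega
  have hne : I ^ (j % 2) * (√(p : ℝ) : ℂ) ^ (m + j) ≠ 0 := by
    have : √(p : ℝ) ≠ 0 := by positivity
    simp [this]
  have hε : (ε : ℤ) = δ := by simpa [nval_eq_mul_I_pow_mul_sqrt_pow, mul_assoc, hne] using h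
  rw [Units.ext hε]

variable [Fact p.Prime]

theorem zetaPow_eq_stdAddChar (a : ZMod p) : zetaPow p a = ZMod.stdAddChar a := by
  rw [ZMod.stdAddChar_apply, ZMod.toCircle_apply, zetaPow]

theorem expSum_eq_sum_addChar [Fintype (GaloisField p m)]
    (t : GaloisField p m × GaloisField p m × GaloisField p m) :
    expSum p m t.1 t.2.1 t.2.2 = ∑ x, ZMod.stdAddChar (traceQuadraticForm
      (FiniteField.frobeniusAlgEquivOfAlgebraic (ZMod p) (GaloisField p m)) t x) := by
  have hinst : Fintype.ofFinite (GaloisField p m) = ‹_› := Subsingleton.elim _ _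
  have hexponent (x : GaloisField p m) :
      t.1 * x ^ 2 + t.2.1 * x ^ (p + 1) + t.2.2 * x ^ (p ^ 2 + 1) =
        t.1 * x * x + t.2.1 * x * x ^ p + t.2.2 * x * (x ^ p) ^ p := by ring
  rw [expSum, hinst]
  simp only [zetaPow_eq_stdAddChar, hexponent, traceQuadraticForm_apply,
    FiniteField.coe_frobeniusAlgEquivOfAlgebraic, ZMod.card]

theorem exists_quadraticGaussSum_stdAddChar_eq (hp : p % 4 = 3) :
    ∃ ε : ℤˣ, quadraticGaussSum (ZMod.stdAddChar (N := p)) = (ε : ℤ) * I * (√(p : ℝ) : ℂ) := by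
  have hp2 : p ≠ 2 := by omega
  have hsq : quadraticGaussSum (ZMod.stdAddChar (N := p)) ^ 2 = (I * √(p : ℝ)) ^ 2 := by
    rw [quadraticGaussSum_sq (by rwa [ZMod.ringChar_zmod_n]) (ZMod.isPrimitive_stdAddChar p),
      quadraticChar_neg_one (by rwa [ZMod.ringChar_zmod_n]), ZMod.card,
      ZMod.χ₄_nat_three_mod_four hp, mul_pow, I_sq, ofReal_sqrt_natCast_sq, Int.cast_neg,
      Int.cast_one]
  obtain h | h := sq_eq_sq_iff_eq_or_eq_neg.mp hsq
  · exact ⟨1, by simp [h]⟩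
  · exact ⟨-1, by simp [h]⟩

theorem two_ne_zero_galoisField (hp : p ≠ 2) : (2 : GaloisField p m) ≠ 0 :=
  Ring.two_ne_zero (by rwa [ringChar.eq (GaloisField p m) p])

theorem exists_expSum_eq_nval (hp : p % 4 = 3) (hm : m ≠ 0) (hme : Even m)
    {t : GaloisField p m × GaloisField p m × GaloisField p m} (ht : t ≠ 0) :
    ∃ ε : ℤˣ, ∃ j < 5, expSum p m t.1 t.2.1 t.2.2 = nval p m ε j := by
  have := Fintype.ofFinite (GaloisField p m)
  have : NeZero (2 : GaloisField p m) := ⟨two_ne_zero_galoisField (by omega)⟩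
  let Q := traceQuadraticForm
    (FiniteField.frobeniusAlgEquivOfAlgebraic (ZMod p) (GaloisField p m)) t
  set k := Module.finrank (ZMod p) Q.radical
  set r := Module.finrank (ZMod p) (GaloisField p m ⧸ Q.radical)
  have hk : k ≤ 4 := finrank_radical_traceQuadraticForm_le ht
  have hkr : r + k = m := by
    rw [Q.radical.finrank_quotient_add_finrank, GaloisField.finrank p hm]
  have hparity : r % 2 = k % 2 := by
    have := Nat.even_iff.mp hme
    omega
  obtain ⟨ε, hε⟩ := exists_sum_addChar_quadraticForm
    (by rw [ZMod.ringChar_zmod_n]; omega) (ZMod.isPrimitive_stdAddChar p) Q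
  obtain ⟨δ, hδ⟩ := exists_quadraticGaussSum_stdAddChar_eq hp
  refine ⟨ε * δ ^ r * (-1) ^ (r / 2), k, Nat.lt_succ_of_le hk, ?_⟩
  calc expSum p m t.1 t.2.1 t.2.2
      = ε * p ^ k * ((δ : ℤ) * I * √(p : ℝ)) ^ r := by
        rw [expSum_eq_sum_addChar, hε, hδ, ZMod.card]
    _ = (ε * δ ^ r * (-1) ^ (r / 2) : ℤˣ) * I ^ (r % 2) * (√(p : ℝ)) ^ (2 * k + r) := by
        rw [mul_pow, mul_pow, I_pow_eq_units_mul_I_pow_mod_two, ← ofReal_sqrt_natCast_sq p]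
        push_cast
        ring
    _ = nval p m _ k := by
        rw [nval_eq_mul_I_pow_mul_sqrt_pow, hparity, ← hkr]
        congr 2
        ring

theorem nn_eq_card [Fintype (GaloisField p m)] [DecidableEq (GaloisField p m)] (ε : ℤ) (j : ℕ) :
    nn p m ε j =
      #{t ∈ ({t | t ≠ 0} : Finset (GaloisField p m × GaloisField p m × GaloisField p m)) |
        expSum p m t.1 t.2.1 t.2.2 = nval p m ε j} := by
  rw [nn, ← Set.ncard_coe_finset]
  congr 1
  ext t
  simp [and_comm, Prod.ext_iff]

theorem sum_expSum_pow_four_eq_sum_nn [Fintype (GaloisField p m)] [DecidableEq (GaloisField p m)]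
    (hp : p % 4 = 3) (hm : m ≠ 0) (hme : Even m) :
    ∑ t : GaloisField p m × GaloisField p m × GaloisField p m with t ≠ 0,
      expSum p m t.1 t.2.1 t.2.2 ^ 4 =
      (p : ℂ) ^ (2 * m) * ∑ j ∈ range 5, (p : ℂ) ^ (2 * j) * (nn p m 1 j + nn p m (-1) j) := by
  rw [sum_comp_eq_sum_card_nsmul (I := (Finset.univ : Finset ℤˣ) ×ˢ range 5)
    (N := fun i ↦ nval p m i.1 i.2) (nval_injective (by omega)) _ (· ^ 4)]
  · simp only [← nn_eq_card, nval_pow_four, nsmul_eq_mul]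
    rw [Finset.sum_product_right, Finset.mul_sum]
    refine Finset.sum_congr rfl fun j _ ↦ ?_
    rw [UnitsInt.univ, Finset.sum_pair (by decide), Units.val_one, Units.val_neg, Units.val_one]
    ring
  · intro t ht
    obtain ⟨ε, j, hj, h⟩ := exists_expSum_eq_nval hp hm hme (Finset.mem_filter.mp ht).2
    exact ⟨(ε, j), Finset.mk_mem_product (Finset.mem_univ ε) (Finset.mem_range.mpr hj), h⟩

end Values

theorem fourth_moment_identity_general {p m : ℕ} [Fact p.Prime] (hp : p % 4 = 3) (hm : 0 < m)
    (hme : Even m) :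
    ∑ j ∈ range 5, (p : ℤ) ^ (2 * j) * (nn p m 1 j + nn p m (-1) j) =
      (p ^ m - 1) * (2 * (p + 1) * p ^ m - p ^ 2) * p ^ m := by
  classical
  have := Fintype.ofFinite (GaloisField p m)
  have : NeZero (2 : GaloisField p m) := ⟨two_ne_zero_galoisField (by omega)⟩
  have hψ : ZMod.stdAddChar (N := p) ≠ 1 :=
    AddChar.mulShift_one (ZMod.stdAddChar (N := p)) ▸ ZMod.isPrimitive_stdAddChar p one_ne_zero
  have hmoment := sum_ne_zero_sum_addChar_traceQuadraticForm_pow_four (F := GaloisField p m) hψ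
  have hcard : Fintype.card (GaloisField p m) = p ^ m := by
    rw [← Nat.card_eq_fintype_card, GaloisField.card p m hm.ne']
  simp only [← expSum_eq_sum_addChar, ZMod.card, hcard,
    sum_expSum_pow_four_eq_sum_nn hp hm.ne' hme] at hmoment
  have hpm : (p : ℂ) ^ (2 * m) ≠ 0 := pow_ne_zero _ (NeZero.ne _)
  refine Int.cast_injective (α := ℂ) (mul_left_cancel₀ hpm ?_)
  push_cast at hmoment ⊢
  linear_combination hmoment

theorem fourth_moment_identity (m : ℕ) (hm : 0 < m) (hme : Even m) :
    letI : Fact (Nat.Prime 3) := ⟨by norm_num⟩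
    (nn 3 m 1 0 : ℤ) + nn 3 m (-1) 0 +
      (3 : ℤ) ^ 2 * ((nn 3 m 1 1 : ℤ) + nn 3 m (-1) 1) +
      (3 : ℤ) ^ 4 * ((nn 3 m 1 2 : ℤ) + nn 3 m (-1) 2) +
      (3 : ℤ) ^ 6 * ((nn 3 m 1 3 : ℤ) + nn 3 m (-1) 3) +
      (3 : ℤ) ^ 8 * ((nn 3 m 1 4 : ℤ) + nn 3 m (-1) 4) =
      (8 * ((3 : ℤ) ^ m - 1) ^ 2 - (3 : ℤ) ^ m + 1) * (3 : ℤ) ^ m := by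
  have hgeneral := @fourth_moment_identity_general 3 m ⟨by norm_num⟩ rfl hm hme
  simp only [Finset.sum_range_succ, Finset.sum_range_zero] at hgeneral
  linear_combination hgeneral
end

section
/- Let p be an odd prime with p ≡ 3 (mod 4), m a positive integer, and q = p^m. Then Σ_{(α,β,γ) ∈ F_q³} S(α,β,γ)³ = ((p+1)(p^m − 1) + 1)·p^{3m}. -/
open Complex Finset

/-!
By orthogonality of additive characters, the third moment is `q³` times the number of `v ∈ 𝔽_q³`
with `∑ vᵢ² = ∑ vᵢ ^ (p + 1) = ∑ vᵢ ^ (p² + 1) = 0`. The first two equations say that `v` and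
its Frobenius image span a totally isotropic subspace for the dot product; in dimension three such
a subspace is at most a line. Hence Frobenius preserves the line through `v`, so `v` is a multiple
of an isotropic vector with coordinates in `𝔽_p`, for which every equation `∑ vᵢ ^ (p ^ k + 1) = 0`
holds. The conic `x² + y² + z² = 0` has `p + 1` points over `𝔽_p`, so there are
`(p + 1) (q - 1) + 1` solutions.
-/

section Moments

theorem sum_addChar_sum_pow {T V X R : Type*} [Fintype T] [AddCommMonoid V] [DecidableEq V]
    [Fintype X] [CommSemiring R] {e : T → AddChar V R} {c : R}
    (he : ∀ v, ∑ t, e t v = if v = 0 then c else 0) (f : X → V) (n : ℕ) :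
    ∑ t, (∑ x, e t (f x)) ^ n = #{v : Fin n → X | ∑ i, f (v i) = 0} * c := by
  have expand (t : T) : (∑ x, e t (f x)) ^ n = ∑ v : Fin n → X, e t (∑ i, f (v i)) := by
    rw [Fintype.sum_pow]
    exact sum_congr rfl fun v _ => (map_prod (e t).toMonoidHom _ univ).symm
  simp_rw [expand]
  rw [sum_comm]
  simp_rw [he]
  rw [← sum_filter, sum_const, nsmul_eq_mul]

variable {F R : Type*} [CommRing F]

/-- The additive character `v ↦ ψ (t · v)` of `F³` attached to `t ∈ F³`; for primitive `ψ` these are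
orthogonal, which turns power moments of exponential sums into numbers of solutions. `F³` is encoded
as `F × F × F`, the type of the parameters `(α, β, γ)`. -/
def tripleChar [CommMonoid R] (ψ : AddChar F R) (t : F × F × F) : AddChar (F × F × F) R :=
  ψ.compAddMonoidHom <| (AddMonoidHom.mulLeft t.1).coprod <|
    (AddMonoidHom.mulLeft t.2.1).coprod (AddMonoidHom.mulLeft t.2.2)

theorem tripleChar_apply [CommMonoid R] (ψ : AddChar F R) (t v : F × F × F) :
    tripleChar ψ t v = ψ (t.1 * v.1 + t.2.1 * v.2.1 + t.2.2 * v.2.2) := by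
  rw [add_assoc]
  rfl

theorem sum_tripleChar [Fintype F] [DecidableEq F] [CommRing R] [IsDomain R] {ψ : AddChar F R}
    (hψ : ψ.IsPrimitive) (v : F × F × F) :
    ∑ t, tripleChar ψ t v = if v = 0 then (Fintype.card F : R) ^ 3 else 0 := by
  obtain ⟨a, b, c⟩ := v
  simp_rw [tripleChar_apply, AddChar.map_add_eq_mul, mul_assoc, Fintype.sum_prod_type, ← mul_sum,
    ← sum_mul, AddChar.sum_mulShift _ hψ, Prod.mk_eq_zero]
  split_ifs <;> simp_all [pow_three]

end Moments

section RationalPoints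

variable {K F : Type*} [Field K] [Field F] [Algebra K F]

theorem not_linearIndependent_pair_of_isotropic {v w : Fin 3 → F}
    (hv : v ⬝ᵥ v = 0) (hvw : v ⬝ᵥ w = 0) (hw : w ⬝ᵥ w = 0) :
    ¬ LinearIndependent F ![v, w] := by
  rw [← crossProduct_ne_zero_iff_linearIndependent]
  intro hu
  -- Isotropy makes `v` and `w` orthogonal to each other and to themselves, so that the double cross
  -- products `(v × w) × v` and `(v × w) × w` vanish and both vectors are multiples of `v × w`.
  have multiple_of_cross {x : Fin 3 → F} (hx : crossProduct (crossProduct v w) x = 0) :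
      ∃ a : F, a • crossProduct v w = x := by
    by_contra! h
    exact crossProduct_ne_zero_iff_linearIndependent.2 ((LinearIndependent.pair_iff' hu).2 h) hx
  obtain ⟨a, ha⟩ := multiple_of_cross (x := v) <| by
    rw [cross_cross_eq_smul_sub_smul, hv, dotProduct_comm, hvw, zero_smul, zero_smul, sub_zero]
  obtain ⟨b, hb⟩ := multiple_of_cross (x := w) <| by
    rw [cross_cross_eq_smul_sub_smul, hw, hvw, zero_smul, zero_smul, sub_zero]
  refine hu ?_
  calc crossProduct v w = crossProduct (a • crossProduct v w) (b • crossProduct v w) := by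
        rw [ha, hb]
    _ = 0 := by rw [map_smul, map_smul, LinearMap.smul_apply, cross_self, smul_zero, smul_zero]

theorem exists_algebraMap_eq_of_pow_card_eq_self [Fintype K] {x : F}
    (hx : x ^ Fintype.card K = x) : ∃ a : K, algebraMap K F a = x := by
  have splits : (Polynomial.X ^ Fintype.card K - Polynomial.X : Polynomial K).Splits := by
    rw [Polynomial.splits_iff_card_roots, FiniteField.roots_X_pow_card_sub_X, ← card_def,
      card_univ, FiniteField.X_pow_card_sub_X_natDegree_eq K Fintype.one_lt_card]
  refine splits.mem_range_of_isRoot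
    (FiniteField.X_pow_card_sub_X_ne_zero K Fintype.one_lt_card) ?_
  simp [hx]

/-- The affine cone over the `K`-rational points of the projective set defined by `S`: all
`F`-multiples of the vectors of `S`. The simultaneous zeros of the forms `∑ vᵢ ^ (|K| ^ k + 1)` in
three variables are such a cone. -/
def rationalCone {ι : Type*} (F : Type*) [Field F] [Algebra K F] (S : Set (ι → K)) :
    Set (ι → F) :=
  {v | ∃ c : F, ∃ w ∈ S, v = c • (algebraMap K F ∘ w)}

theorem mem_rationalCone_univ_of_pow_card_eq_mul [Fintype K] {ι : Type*} {v : ι → F} {l : F}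
    (hl : ∀ i, v i ^ Fintype.card K = l * v i) : v ∈ rationalCone F (Set.univ : Set (ι → K)) := by
  rcases eq_or_ne v 0 with rfl | hv
  · exact ⟨0, 0, trivial, (zero_smul _ _).symm⟩
  · obtain ⟨j, hj⟩ := Function.ne_iff.1 hv
    have fixed (i : ι) : (v i / v j) ^ Fintype.card K = v i / v j := by
      have hl0 : l ≠ 0 := left_ne_zero_of_mul (hl j ▸ pow_ne_zero _ hj)
      rw [div_pow, hl, hl, mul_div_mul_left _ _ hl0]
    choose w hw using fun i => exists_algebraMap_eq_of_pow_card_eq_self (fixed i)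
    exact ⟨v j, w, trivial, funext fun i => by simp [hw, mul_div_cancel₀ _ hj]⟩

variable [Fintype K]

theorem mem_rationalCone_of_isotropic {v : Fin 3 → F} (hv : ∑ i, v i ^ 2 = 0)
    (hfrob : ∑ i, v i ^ (Fintype.card K + 1) = 0) :
    v ∈ rationalCone F {w : Fin 3 → K | w ⬝ᵥ w = 0} := by
  rcases eq_or_ne v 0 with rfl | hv0
  · exact ⟨0, 0, dotProduct_zero _, (zero_smul _ _).symm⟩
  have isotropic : v ⬝ᵥ v = 0 := by simpa only [dotProduct, ← sq] using hv
  have orthogonal : v ⬝ᵥ (FiniteField.frobeniusAlgHom K F ∘ v) = 0 := by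
    simpa [dotProduct, pow_succ'] using! hfrob
  have isotropic_frob :
      (FiniteField.frobeniusAlgHom K F ∘ v) ⬝ᵥ (FiniteField.frobeniusAlgHom K F ∘ v) = 0 := by
    rw [← AlgHom.coe_toRingHom, ← RingHom.map_dotProduct, isotropic, map_zero]
  obtain ⟨l, hl⟩ : ∃ l : F, l • v = FiniteField.frobeniusAlgHom K F ∘ v := by
    by_contra! h
    exact not_linearIndependent_pair_of_isotropic isotropic orthogonal isotropic_frob
      ((LinearIndependent.pair_iff' hv0).2 h)
  obtain ⟨c, w, -, rfl⟩ := mem_rationalCone_univ_of_pow_card_eq_mul (K := K) (l := l)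
    fun i => (congrFun hl i).symm
  have hc : c ≠ 0 := left_ne_zero_of_smul hv0
  refine ⟨c, w, (algebraMap K F).injective ?_, rfl⟩
  rw [smul_dotProduct, dotProduct_smul] at isotropic
  simpa [hc, ← RingHom.map_dotProduct] using isotropic

theorem sum_pow_card_pow_add_one_eq_zero {ι : Type*} [Fintype ι] {v : ι → F}
    (hv : v ∈ rationalCone F {w : ι → K | w ⬝ᵥ w = 0}) (k : ℕ) :
    ∑ i, v i ^ (Fintype.card K ^ k + 1) = 0 := by
  obtain ⟨c, w, hw, rfl⟩ := hv
  calc ∑ i, (c * algebraMap K F (w i)) ^ (Fintype.card K ^ k + 1)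
      = c ^ (Fintype.card K ^ k + 1) * algebraMap K F (w ⬝ᵥ w) := by
        simp_rw [dotProduct, map_sum, mul_sum, mul_pow, ← map_pow, pow_succ (w _),
          FiniteField.pow_card_pow]
    _ = 0 := by rw [hw, map_zero, mul_zero]

end RationalPoints

section ConeCount

variable {K F : Type*} [Field K] [Field F] [Algebra K F]

theorem rationalCone_fin_zero {S : Set (Fin 0 → K)} (hS : S.Nonempty) :
    rationalCone F S = Set.univ :=
  Set.eq_univ_of_forall fun _ => ⟨1, hS.some, hS.some_mem, Subsingleton.elim _ _⟩

open Matrix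

variable {n : ℕ} {S : Set (Fin (n + 1) → K)}

theorem rationalCone_succ (hS : ∀ a : K, ∀ w ∈ S, a • w ∈ S) :
    rationalCone F S = vecCons 0 '' rationalCone F {u | vecCons 0 u ∈ S} ∪
      (fun x : Fˣ × (Fin n → K) => (x.1 : F) • vecCons 1 (algebraMap K F ∘ x.2)) ''
        Set.univ ×ˢ {u | vecCons 1 u ∈ S} := by
  have smul_map_cons (c : F) (a : K) (u : Fin n → K) : c • (algebraMap K F ∘ vecCons a u) =
      vecCons (c * algebraMap K F a) (c • (algebraMap K F ∘ u)) := by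
    ext i
    cases i using Fin.cases <;> simp
  ext v
  constructor
  · rintro ⟨c, w, hw, rfl⟩
    obtain ⟨a, u, rfl⟩ : ∃ a u, w = vecCons a u := ⟨_, _, (cons_head_tail w).symm⟩
    rcases eq_or_ne a 0 with rfl | ha
    · exact .inl ⟨_, ⟨c, u, hw, rfl⟩, by rw [smul_map_cons, map_zero, mul_zero]⟩
    rcases eq_or_ne c 0 with rfl | hc
    · have zero_mem : vecCons 0 0 ∈ S := by simpa using hS 0 _ hw
      exact .inl ⟨0, ⟨0, 0, zero_mem, (zero_smul _ _).symm⟩, by simp⟩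
    · have hca : c * algebraMap K F a ≠ 0 := mul_ne_zero hc <| by simpa
      have normalized_mem : vecCons 1 (a⁻¹ • u) ∈ S := by simpa [ha] using hS a⁻¹ _ hw
      refine .inr ⟨(Units.mk0 _ hca, a⁻¹ • u), ⟨trivial, normalized_mem⟩, ?_⟩
      ext i
      cases i using Fin.cases <;> simp [ha, mul_assoc]
  · rintro (⟨_, ⟨c, u, hu, rfl⟩, rfl⟩ | ⟨⟨c, u⟩, ⟨-, hu⟩, rfl⟩)
    · exact ⟨c, _, hu, by rw [smul_map_cons, map_zero, mul_zero]⟩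
    · exact ⟨c, _, hu, by simp [smul_map_cons]⟩

theorem ncard_rationalCone_succ [Finite K] [Fintype F] (hS : ∀ a : K, ∀ w ∈ S, a • w ∈ S) :
    (rationalCone F S).ncard = (rationalCone F {u | vecCons 0 u ∈ S}).ncard +
      (Fintype.card F - 1) * {u | vecCons 1 u ∈ S}.ncard := by
  classical
  have param_injective : Function.Injective fun x : Fˣ × (Fin n → K) =>
      (x.1 : F) • vecCons 1 (algebraMap K F ∘ x.2) := by
    rintro ⟨c, u⟩ ⟨d, w⟩ h
    simp only [smul_cons, smul_eq_mul, mul_one, vecCons_inj, Units.val_inj] at h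
    obtain ⟨rfl, h⟩ := h
    rw [(algebraMap K F).injective.comp_left (smul_right_injective _ c.ne_zero h)]
  rw [rationalCone_succ hS, Set.ncard_union_eq, Set.ncard_image_of_injective _ param_injective,
    Set.ncard_prod, Set.ncard_univ, Nat.card_eq_fintype_card, Fintype.card_units,
    Set.ncard_image_of_injective]
  · exact fun u w h => (vecCons_inj.1 h).2
  · refine Set.disjoint_left.2 ?_
    rintro _ ⟨u, -, rfl⟩ ⟨⟨c, w⟩, -, h⟩
    exact c.ne_zero (by simpa using congrFun h 0)

theorem ncard_rationalCone_isotropic_succ [Finite K] [Fintype F] (n : ℕ) :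
    (rationalCone F {w : Fin (n + 1) → K | w ⬝ᵥ w = 0}).ncard =
      (rationalCone F {w : Fin n → K | w ⬝ᵥ w = 0}).ncard +
        (Fintype.card F - 1) * {u : Fin n → K | u ⬝ᵥ u = -1}.ncard := by
  have smul_mem (a : K) (w : Fin (n + 1) → K) (hw : w ∈ {w | w ⬝ᵥ w = 0}) :
      a • w ∈ {w | w ⬝ᵥ w = 0} := by
    simp_all
  simp [ncard_rationalCone_succ smul_mem, add_eq_zero_iff_eq_neg']

end ConeCount

section Conic

variable {K : Type*} [Field K] [Fintype K] [DecidableEq K]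

theorem card_sq_add_sq_eq_neg_one_eq_sum (hK : ringChar K ≠ 2) :
    (#{v : K × K | v.1 ^ 2 + v.2 ^ 2 = -1} : ℤ) =
      ∑ u : K, (quadraticChar K u + 1) * (quadraticChar K (-1 - u) + 1) := by
  rw [Finset.card_eq_sum_card_fiberwise (f := fun v => v.1 ^ 2) (t := Finset.univ)
    (fun _ _ => by simp), Nat.cast_sum]
  refine sum_congr rfl fun u _ => ?_
  rw [← quadraticChar_card_sqrts hK, ← quadraticChar_card_sqrts hK, ← Nat.cast_mul,
    ← card_product]
  congr 2
  ext ⟨a, b⟩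
  simp only [mem_filter, mem_product, Set.mem_toFinset, Set.mem_ofPred_eq]
  grind

theorem sum_quadraticChar_mul_quadraticChar_neg_one_sub (hK : ringChar K ≠ 2) :
    ∑ u : K, quadraticChar K u * quadraticChar K (-1 - u) = -quadraticChar K (-1) := by
  rw [← jacobiSum_nontrivial_inv (quadraticChar_ne_one hK), jacobiSum,
    (quadraticChar_isQuadratic K).inv, ← Equiv.sum_comp (Equiv.neg K)]
  refine sum_congr rfl fun u _ => ?_
  rw [← map_mul, ← map_mul, Equiv.neg_apply]
  ring_nf

theorem card_sq_add_sq_eq_neg_one (hK : ringChar K ≠ 2) :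
    (#{v : K × K | v.1 ^ 2 + v.2 ^ 2 = -1} : ℤ) = Fintype.card K - quadraticChar K (-1) := by
  have sum_shift : ∑ u : K, quadraticChar K (-1 - u) = 0 :=
    ((Equiv.subLeft (-1 : K)).sum_comp (quadraticChar K)).trans (quadraticChar_sum_zero hK)
  calc (#{v : K × K | v.1 ^ 2 + v.2 ^ 2 = -1} : ℤ)
      = ∑ u : K, (quadraticChar K u * quadraticChar K (-1 - u) + quadraticChar K u +
          quadraticChar K (-1 - u) + 1) := by
        rw [card_sq_add_sq_eq_neg_one_eq_sum hK]
        exact sum_congr rfl fun u _ => by ring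
    _ = Fintype.card K - quadraticChar K (-1) := by
        simp_rw [sum_add_distrib, sum_quadraticChar_mul_quadraticChar_neg_one_sub hK,
          quadraticChar_sum_zero hK, sum_shift, sum_const, card_univ, nsmul_one]
        ring

/-- A projective conic `x² + y² + z² = 0` has as many rational points as a line: the two terms count
those with `z = 0`, normalized by `y = 1`, and those with `z = 1`. In characteristic two it is the
double line `(x + y + z)² = 0`. -/
theorem card_sq_eq_neg_one_add_card_sq_add_sq_eq_neg_one :
    #{a : K | a ^ 2 = -1} + #{v : K × K | v.1 ^ 2 + v.2 ^ 2 = -1} = Fintype.card K + 1 := by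
  by_cases hK : ringChar K = 2
  · have : CharP K 2 := ringChar.of_eq hK
    have points_at_infinity : ({a : K | a ^ 2 = -1} : Finset K) = {1} := by
      ext a
      simp [CharTwo.neg_eq]
    have affine_points : ({v : K × K | v.1 ^ 2 + v.2 ^ 2 = -1} : Finset (K × K)) =
        univ.image fun a => (a, a + 1) := by
      ext ⟨a, b⟩
      simp only [← CharTwo.add_sq, CharTwo.neg_eq, sq_eq_one_iff, or_self, mem_filter_univ,
        mem_image, mem_univ, true_and, Prod.mk.injEq, exists_eq_left]
      grind
    rw [points_at_infinity, affine_points, card_singleton,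
      card_image_of_injective _ fun a b h => congrArg Prod.fst h, card_univ, add_comm]
  · have points_at_infinity := quadraticChar_card_sqrts hK (-1)
    have affine_points := card_sq_add_sq_eq_neg_one hK
    simp only [Set.toFinset_ofPred] at points_at_infinity
    omega

end Conic

theorem ncard_rationalCone_isotropic (K F : Type*) [Field K] [Fintype K] [Field F] [Fintype F]
    [Algebra K F] : (rationalCone F {w : Fin 3 → K | w ⬝ᵥ w = 0}).ncard =
      (Fintype.card K + 1) * (Fintype.card F - 1) + 1 := by
  classical
  have cone_univ : rationalCone F {w : Fin 0 → K | w ⬝ᵥ w = 0} = Set.univ :=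
    rationalCone_fin_zero ⟨0, dotProduct_zero _⟩
  have dim_zero : {u : Fin 0 → K | u ⬝ᵥ u = -1}.ncard = 0 := by simp
  have dim_one : {u : Fin 1 → K | u ⬝ᵥ u = -1}.ncard = #{a : K | a ^ 2 = -1} := by
    rw [← Set.ncard_coe_finset]
    refine Nat.card_congr ((Equiv.funUnique (Fin 1) K).subtypeEquiv fun u => ?_)
    simp [dotProduct, sq]
  have dim_two : {u : Fin 2 → K | u ⬝ᵥ u = -1}.ncard =
      #{v : K × K | v.1 ^ 2 + v.2 ^ 2 = -1} := by
    rw [← Set.ncard_coe_finset]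
    refine Nat.card_congr ((finTwoArrowEquiv K).subtypeEquiv fun u => ?_)
    simp [dotProduct, sq]
  rw [ncard_rationalCone_isotropic_succ, ncard_rationalCone_isotropic_succ,
    ncard_rationalCone_isotropic_succ, dim_zero, dim_one, dim_two, cone_univ, Set.ncard_univ,
    Nat.card_unique, ← card_sq_eq_neg_one_add_card_sq_add_sq_eq_neg_one]
  ring

theorem card_frobenius_isotropic (K F : Type*) [Field K] [Fintype K] [Field F] [Fintype F]
    [DecidableEq F] [Algebra K F] (k : ℕ) :
    #{v : Fin 3 → F | ∑ i, v i ^ 2 = 0 ∧ ∑ i, v i ^ (Fintype.card K + 1) = 0 ∧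
      ∑ i, v i ^ (Fintype.card K ^ k + 1) = 0} =
    (Fintype.card K + 1) * (Fintype.card F - 1) + 1 := by
  rw [← ncard_rationalCone_isotropic, ← Set.ncard_coe_finset]
  congr 1
  ext v
  rw [mem_coe, mem_filter_univ]
  refine ⟨fun h => mem_rationalCone_of_isotropic h.1 h.2.1, fun h => ⟨?_, ?_, ?_⟩⟩
  · simpa using sum_pow_card_pow_add_one_eq_zero h 0
  · simpa using sum_pow_card_pow_add_one_eq_zero h 1
  · exact sum_pow_card_pow_add_one_eq_zero h k

theorem sum_S_third_moment_general (K : Type*) {F R : Type*} [Field K] [Fintype K] [Field F]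
    [Fintype F] [Algebra K F] [CommRing R] [IsDomain R] {ψ : AddChar F R} (hψ : ψ.IsPrimitive)
    (k : ℕ) :
    ∑ t : F × F × F, (∑ x, ψ (t.1 * x ^ 2 + t.2.1 * x ^ (Fintype.card K + 1) +
      t.2.2 * x ^ (Fintype.card K ^ k + 1))) ^ 3 =
        (((Fintype.card K : R) + 1) * ((Fintype.card F : R) - 1) + 1) *
          (Fintype.card F : R) ^ 3 := by
  classical
  have moment := sum_addChar_sum_pow (sum_tripleChar hψ)
    (fun x => (x ^ 2, x ^ (Fintype.card K + 1), x ^ (Fintype.card K ^ k + 1))) 3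
  simp only [tripleChar_apply, Prod.ext_iff] at moment
  simp only [Prod.fst_zero, Prod.snd_zero, Prod.fst_sum, Prod.snd_sum] at moment
  rw [moment, card_frobenius_isotropic]
  simp [Nat.cast_pred Fintype.card_pos]

/-- The canonical additive character `x ↦ exp (2πi Tr x / p)` of an `𝔽_p`-algebra; `expSum` is
a sum of its values. -/
noncomputable def traceChar (p : ℕ) [NeZero p] (F : Type*) [CommRing F] [Algebra (ZMod p) F] :
    AddChar F ℂ :=
  (ZMod.stdAddChar (N := p)).compAddMonoidHom (Algebra.trace (ZMod p) F).toAddMonoidHom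

theorem traceChar_isPrimitive (p : ℕ) [Fact p.Prime] (F : Type*) [Field F] [Finite F]
    [Algebra (ZMod p) F] : (traceChar p F).IsPrimitive := by
  obtain ⟨x, hx⟩ := Algebra.trace_surjective (ZMod p) F 1
  refine AddChar.IsPrimitive.of_ne_one (AddChar.ne_one_iff.2 ⟨x, fun h => ?_⟩)
  refine one_ne_zero (α := ZMod p) (ZMod.injective_stdAddChar ?_)
  rw [AddChar.map_zero_eq_one, ← h, ← hx]
  rfl

theorem zetaPow_trace (p : ℕ) [NeZero p] {F : Type*} [CommRing F] [Algebra (ZMod p) F] (x : F) :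
    zetaPow p (Algebra.trace (ZMod p) F x) = traceChar p F x := by
  rw [zetaPow, ← ZMod.toCircle_apply, ← ZMod.stdAddChar_apply]
  rfl

theorem sum_S_third_moment (p : ℕ) [Fact p.Prime] (hp4 : p % 4 = 3)
    (m : ℕ) (hm : 0 < m) :
    letI : Fintype (GaloisField p m) := Fintype.ofFinite _
    ∑ t : GaloisField p m × GaloisField p m × GaloisField p m,
      (expSum p m t.1 t.2.1 t.2.2) ^ 3 =
        (((p : ℂ) + 1) * ((p : ℂ) ^ m - 1) + 1) * (p : ℂ) ^ (3 * m) := by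
  let : Fintype (GaloisField p m) := Fintype.ofFinite _
  have card_field : Fintype.card (GaloisField p m) = p ^ m := by
    rw [← Nat.card_eq_fintype_card, GaloisField.card p m hm.ne']
  simpa [expSum, zetaPow_trace, ZMod.card, card_field, pow_mul', -map_add] using
    sum_S_third_moment_general (ZMod p) (traceChar_isPrimitive p (GaloisField p m)) 2
end
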